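/- Let C be a small category, F : Cᵒᵖ ⥤ Type u a functor, B a category admitting colimits of shape (el F)ᵒᵖ, and G : C ⥤ B a functor. Set L := colimit of the composite (el F)ᵒᵖ --πᵒᵖ--> C --G--> B (where π : el F → Cᵒᵖ is the projection of the category of elements of F, and we pass to opposite categories to land in C). Then for every object b of B there is a bijection, natural in b, between morphisms L ⟶ b in B and natural transformations from F to the functor Cᵒᵖ ⥤ Type sending c to the hom-set B(G(c), b). (That is, L satisfies the universal property of the F-weighted (indexed) colimit F ∗ G.) -/

import Mathlib

/-!
A morphism out of the colimit over `(el F)ᵒᵖ` is a cocone on `(c, x) ↦ G c`, that is, a family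
of morphisms `α (c, x) : G c ⟶ b` compatible with the morphisms of `el F`. Currying such a
family gives functions `F c → B(G c, b)`, and since a morphism of `el F` out of `(c, x)` is just
a morphism `h` of `Cᵒᵖ` out of `c` (its target being forced to be `(c', F h x)`), the cocone
condition is exactly naturality in `c`. Naturality in `b` is associativity of composition.
-/

open CategoryTheory CategoryTheory.Limits Opposite

universe v u

/-- The natural transformation `F ⟶ B(G-, b)` sending `x : F c` to the restriction of `g`
along the coprojection of the colimit at `(c, x)`. -/
noncomputable def natTransOfColimitHom {C : Type u} [SmallCategory C]
    {B : Type v} [Category.{u} B] (F : Cᵒᵖ ⥤ Type u) (G : C ⥤ B)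
    [HasColimitsOfShape F.Elementsᵒᵖ B] {b : B}
    (g : colimit ((CategoryOfElements.π F).leftOp ⋙ G) ⟶ b) :
    F ⟶ G.op ⋙ yoneda.obj b where
  app c := ↾fun x ↦
    colimit.ι ((CategoryOfElements.π F).leftOp ⋙ G) (op (F.elementsMk c x)) ≫ g
  naturality c c' h := by
    ext x
    have w := colimit.w ((CategoryOfElements.π F).leftOp ⋙ G)
      (CategoryOfElements.homMk (F.elementsMk c x) (F.elementsMk c' (F.map h x)) h rfl).op
    exact (congrArg (· ≫ g) w.symm).trans (Category.assoc _ _ _)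

/-- The cocone with point `b` whose component at `(c, x)` is `t c x : G c ⟶ b`. -/
def coconeOfNatTrans {C : Type u} [SmallCategory C]
    {B : Type v} [Category.{u} B] (F : Cᵒᵖ ⥤ Type u) (G : C ⥤ B) {b : B}
    (t : F ⟶ G.op ⋙ yoneda.obj b) :
    Cocone ((CategoryOfElements.π F).leftOp ⋙ G) where
  pt := b
  ι :=
    { app p := t.app p.unop.1 p.unop.2
      naturality p q h := by
        have n := t.naturality_apply h.unop.val q.unop.2
        rw [h.unop.property] at n
        exact n.symm.trans (Category.comp_id _).symm }

/-- Let `F : Cᵒᵖ ⥤ Type u` be a functor on a small category `C`, let `B` be a category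
admitting colimits of shape `(el F)ᵒᵖ`, and `G : C ⥤ B`.  Then
`L := colimit ((el F)ᵒᵖ --πᵒᵖ--> C --G--> B)` satisfies the universal property of the
`F`-weighted colimit `F ∗ G` of `G`: morphisms `L ⟶ b` are in bijection, naturally in
`b`, with natural transformations `F ⟶ B(G-, b)`. -/
theorem colimit_over_elements_is_weighted_colimit {C : Type u} [SmallCategory C]
    {B : Type v} [Category.{u} B] (F : Cᵒᵖ ⥤ Type u) (G : C ⥤ B)
    [HasColimitsOfShape F.Elementsᵒᵖ B] :
    ∃ e : ∀ b : B,
        (colimit ((CategoryOfElements.π F).leftOp ⋙ G) ⟶ b) ≃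
          (F ⟶ G.op ⋙ yoneda.obj b),
      ∀ (b b' : B) (f : b ⟶ b')
        (g : colimit ((CategoryOfElements.π F).leftOp ⋙ G) ⟶ b)
        (c : Cᵒᵖ) (x : F.obj c),
        (e b' (g ≫ f)).app c x = (e b g).app c x ≫ f := by
  refine ⟨fun b ↦
    { toFun := natTransOfColimitHom F G
      invFun := fun t ↦ colimit.desc _ (coconeOfNatTrans F G t)
      left_inv := fun g ↦ colimit.hom_ext fun p ↦ colimit.ι_desc _ p
      right_inv := fun t ↦ ?_ }, fun b b' f g c x ↦ (Category.assoc _ _ _).symm⟩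
  ext c x
  exact colimit.ι_desc (coconeOfNatTrans F G t) (op (F.elementsMk c x))
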